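/- Let 𝒮 be a maximal totally singular subspace of (R^3, q^3), where (R,q) is a non-singular 2m-dimensional plus-type quadratic space over F_2. For i ∈ {1,2,3} let S_i be the image under the i-th projection of the subspace of 𝒮 vanishing in the other two coordinates. If 𝒮 contains no non-zero vector supported in a single coordinate position for at least one of the three coordinates (i.e., min dim S_i = 0 after reordering, with k_1 ≥ k_2 ≥ k_3), then the i-th projection ρ_i(𝒮) equals S_i^⊥, and in particular dim ρ_3(𝒮) = 2m, dim ρ_2(𝒮) = 2m - k_2, dim ρ_1(𝒮) = 2m - k_1. -/

import Mathlib

open QuadraticMap Module Submodule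

section
variable {R : Type*} [AddCommGroup R] [Module (ZMod 2) R]

def IsTotallySingular (Q : QuadraticForm (ZMod 2) R) (S : Submodule (ZMod 2) R) : Prop :=
  ∀ x ∈ S, Q x = 0

def QuadNonsingular (Q : QuadraticForm (ZMod 2) R) : Prop :=
  ∀ a : R, (∀ b : R, polar Q a b = 0) → a = 0

def IsPlusType (Q : QuadraticForm (ZMod 2) R) (m : ℕ) : Prop :=
  (∃ S : Submodule (ZMod 2) R, IsTotallySingular Q S ∧ Module.finrank (ZMod 2) S = m) ∧
  ∀ S : Submodule (ZMod 2) R, IsTotallySingular Q S → Module.finrank (ZMod 2) S ≤ m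

def orthComp (Q : QuadraticForm (ZMod 2) R) (A : Submodule (ZMod 2) R) :
    Submodule (ZMod 2) R where
  carrier := {x | ∀ a ∈ A, polar Q x a = 0}
  add_mem' := fun hx hy a ha => by
    rw [polar_add_left, hx a ha, hy a ha, add_zero]
  zero_mem' := fun a ha => by simp [polar]
  smul_mem' := fun c x hx a ha => by
    rw [polar_smul_left, hx a ha, smul_zero]

def NonsingularOn (Q : QuadraticForm (ZMod 2) R) (A : Submodule (ZMod 2) R) : Prop :=
  ∀ x ∈ A, (∀ y ∈ A, polar Q x y = 0) → x = 0

end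

section
variable {R : Type*} [AddCommGroup R] [Module (ZMod 2) R]

/-- The i-th coordinate projection R³ → R. -/
def proj3 (i : Fin 3) : (Fin 3 → R) →ₗ[ZMod 2] R := LinearMap.proj i

/-- S_i = ρ_i(𝒮^{(jk)}), the i-th projection of the part of 𝒮 vanishing in the
j-th and k-th coordinates. -/
def coordPart (𝒮 : Submodule (ZMod 2) (Fin 3 → R)) (i j k : Fin 3) :
    Submodule (ZMod 2) R :=
  Submodule.map (proj3 i) (𝒮 ⊓ LinearMap.ker (proj3 j) ⊓ LinearMap.ker (proj3 k))

end

/-!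
The inclusion of the `i`-th summand into an orthogonal direct sum is adjoint to the `i`-th
projection `ρ_i`, so `ρ_i(𝒮)^⊥` consists of the vectors whose copy in position `i` lies in `𝒮^⊥`.
A totally singular subspace of half the dimension is its own orthogonal complement, hence
`ρ_i(𝒮)^⊥ = S_i`, and taking orthogonal complements once more gives `ρ_i(𝒮) = S_i^⊥`.
-/

section BilinForm

theorem orthogonal_map_of_isAdjointPair {K V W : Type*} [CommSemiring K] [AddCommMonoid V]
    [AddCommMonoid W] [Module K V] [Module K W] {B : LinearMap.BilinForm K V}
    {C : LinearMap.BilinForm K W} {f : V →ₗ[K] W} {g : W →ₗ[K] V}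
    (hfg : LinearMap.IsAdjointPair B C f g) (S : Submodule K V) :
    C.orthogonal (S.map f) = (B.orthogonal S).comap g := by
  ext w
  simp only [LinearMap.BilinForm.mem_orthogonal_iff, mem_comap, mem_map, forall_exists_index,
    and_imp, forall_apply_eq_imp_iff₂, hfg _ w]

variable {K V : Type*} [Field K] [AddCommGroup V] [Module K V] [FiniteDimensional K V]
  {B : LinearMap.BilinForm K V} {S : Submodule K V}

theorem finrank_add_finrank_orthogonal_of_nondegenerate (hB : B.Nondegenerate)
    (S : Submodule K V) : finrank K S + finrank K (B.orthogonal S) = finrank K V := by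
  rw [LinearMap.BilinForm.finrank_orthogonal hB, Nat.add_sub_cancel' S.finrank_le]

theorem orthogonal_eq_self_of_le_of_two_mul_finrank (hB : B.Nondegenerate)
    (hS : S ≤ B.orthogonal S) (hdim : 2 * finrank K S = finrank K V) : B.orthogonal S = S := by
  have hsum := finrank_add_finrank_orthogonal_of_nondegenerate hB S
  exact (eq_of_le_of_finrank_eq hS (by lia)).symm

end BilinForm

section Polar

variable {K V P : Type*} [CommRing K] [AddCommGroup V] [AddCommGroup P] [Module K V] [Module K P]

theorem polarBilin_isRefl (Q : QuadraticMap K V P) : Q.polarBilin.IsRefl := fun v w h => by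
  rwa [polarBilin_apply_apply, polar_comm] at h

theorem le_orthogonal_polarBilin_of_forall_eq_zero {Q : QuadraticForm K V} {S : Submodule K V}
    (hS : ∀ v ∈ S, Q v = 0) : S ≤ LinearMap.BilinForm.orthogonal Q.polarBilin S := by
  intro v hv w hw
  simp only [polarBilin_apply_apply, polar, hS _ hv, hS _ hw, hS _ (S.add_mem hw hv), sub_zero]

variable {ι : Type*} [Fintype ι] {M : ι → Type*} [∀ i, AddCommGroup (M i)] [∀ i, Module K (M i)]

theorem isAdjointPair_polarBilin_pi_proj_single [DecidableEq ι]
    (Q : ∀ i, QuadraticMap K (M i) P) (i : ι) :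
    LinearMap.IsAdjointPair (QuadraticMap.pi Q).polarBilin (Q i).polarBilin
      (LinearMap.proj (R := K) (φ := M) i) (LinearMap.single K M i) := by
  intro v a
  simp only [LinearMap.proj_apply, LinearMap.coe_single, polarBilin_apply_apply,
    QuadraticMap.Ring.polar_pi]
  rw [Fintype.sum_eq_single i, Pi.single_eq_same]
  intro j hji
  rw [Pi.single_eq_of_ne hji, polar_zero_right]

theorem polarBilin_pi_nondegenerate {Q : ∀ i, QuadraticMap K (M i) P}
    (hQ : ∀ i, (Q i).polarBilin.Nondegenerate) :
    (QuadraticMap.pi Q).polarBilin.Nondegenerate := by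
  classical
  refine (polarBilin_isRefl _).nondegenerate_iff_separatingLeft.2 fun v hv => funext fun i => ?_
  refine (hQ i).1 (v i) fun a => ?_
  exact (isAdjointPair_polarBilin_pi_proj_single Q i v a).trans (hv _)

end Polar

theorem maximal_ts_projections_general {K ι : Type*} [Field K] [Fintype ι] [DecidableEq ι]
    {M : ι → Type*} [∀ i, AddCommGroup (M i)] [∀ i, Module K (M i)]
    [∀ i, FiniteDimensional K (M i)] {Q : ∀ i, QuadraticForm K (M i)}
    (hQ : ∀ i, (Q i).polarBilin.Nondegenerate) {S : Submodule K (∀ i, M i)}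
    (hS : ∀ v ∈ S, QuadraticMap.pi Q v = 0) (hdim : 2 * finrank K S = finrank K (∀ i, M i))
    (i : ι) :
    S.map (LinearMap.proj i) =
        LinearMap.BilinForm.orthogonal (Q i).polarBilin (S.comap (LinearMap.single K M i)) ∧
      finrank K (S.comap (LinearMap.single K M i)) + finrank K (S.map (LinearMap.proj i)) =
        finrank K (M i) := by
  have self_orthogonal : LinearMap.BilinForm.orthogonal (QuadraticMap.pi Q).polarBilin S = S :=
    orthogonal_eq_self_of_le_of_two_mul_finrank (polarBilin_pi_nondegenerate hQ)
      (le_orthogonal_polarBilin_of_forall_eq_zero hS) hdim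
  have orthogonal_proj : LinearMap.BilinForm.orthogonal (Q i).polarBilin
      (S.map (LinearMap.proj i)) = S.comap (LinearMap.single K M i) := by
    rw [orthogonal_map_of_isAdjointPair (isAdjointPair_polarBilin_pi_proj_single Q i),
      self_orthogonal]
  rw [← orthogonal_proj, LinearMap.BilinForm.orthogonal_orthogonal (hQ i) (polarBilin_isRefl _),
    add_comm]
  exact ⟨rfl, finrank_add_finrank_orthogonal_of_nondegenerate (hQ i) _⟩

section

variable {R : Type*} [AddCommGroup R] [Module (ZMod 2) R]

theorem QuadNonsingular.polarBilin_nondegenerate {Q : QuadraticForm (ZMod 2) R}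
    (hQ : QuadNonsingular Q) : Q.polarBilin.Nondegenerate :=
  (polarBilin_isRefl Q).nondegenerate_iff_separatingLeft.2 hQ

theorem orthComp_eq_orthogonal_polarBilin (Q : QuadraticForm (ZMod 2) R)
    (A : Submodule (ZMod 2) R) :
    orthComp Q A = LinearMap.BilinForm.orthogonal Q.polarBilin A :=
  Submodule.ext fun x => forall₂_congr fun a _ => by
    rw [polarBilin_apply_apply, polar_comm]

theorem coordPart_eq_comap_single (𝒮 : Submodule (ZMod 2) (Fin 3 → R)) {i j k : Fin 3}
    (hij : i ≠ j) (hik : i ≠ k) (hjk : j ≠ k) :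
    coordPart 𝒮 i j k = 𝒮.comap (LinearMap.single (ZMod 2) (fun _ => R) i) := by
  ext a
  constructor
  · rintro ⟨v, ⟨⟨hv, hvj : v j = 0⟩, hvk : v k = 0⟩, rfl⟩
    have single_eq : Pi.single i (v i) = v := by
      funext l
      obtain rfl | rfl | rfl : l = i ∨ l = j ∨ l = k := by lia
      · exact Pi.single_eq_same ..
      · rw [Pi.single_eq_of_ne hij.symm, hvj]
      · rw [Pi.single_eq_of_ne hik.symm, hvk]
    rwa [← single_eq] at hv
  · intro ha
    have vanishes {l : Fin 3} (hil : i ≠ l) : proj3 l (Pi.single i a) = 0 :=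
      Pi.single_eq_of_ne (M := fun _ => R) hil.symm a
    exact ⟨Pi.single i a, ⟨⟨ha, vanishes hij⟩, vanishes hik⟩,
      Pi.single_eq_same (M := fun _ => R) i a⟩

theorem map_proj3_eq_orthComp_coordPart_and_finrank_add_finrank [FiniteDimensional (ZMod 2) R]
    {Q : QuadraticForm (ZMod 2) R} (hQ : QuadNonsingular Q)
    {𝒮 : Submodule (ZMod 2) (Fin 3 → R)} (hS : ∀ v ∈ 𝒮, Q (v 0) + Q (v 1) + Q (v 2) = 0)
    (hdim : 2 * finrank (ZMod 2) 𝒮 = 3 * finrank (ZMod 2) R) {i j k : Fin 3}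
    (hij : i ≠ j) (hik : i ≠ k) (hjk : j ≠ k) :
    map (proj3 i) 𝒮 = orthComp Q (coordPart 𝒮 i j k) ∧
      finrank (ZMod 2) (coordPart 𝒮 i j k) + finrank (ZMod 2) (map (proj3 i) 𝒮) =
        finrank (ZMod 2) R := by
  have totally_singular : ∀ v ∈ 𝒮, QuadraticMap.pi (fun _ : Fin 3 => Q) v = 0 := fun v hv => by
    rw [pi_apply, Fin.sum_univ_three, hS v hv]
  have half_dim : 2 * finrank (ZMod 2) 𝒮 = finrank (ZMod 2) (Fin 3 → R) := by
    rw [hdim, finrank_pi_fintype, Fin.sum_const, smul_eq_mul]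
  rw [orthComp_eq_orthogonal_polarBilin, coordPart_eq_comap_single 𝒮 hij hik hjk]
  exact maximal_ts_projections_general (fun _ => hQ.polarBilin_nondegenerate)
    totally_singular half_dim i

end

/-- If 𝒮 is a maximal totally singular subspace of R³ with S₃ = 0 and
k₁ = dim S₁ ≥ k₂ = dim S₂, then ρ_i(𝒮) = S_i^⊥, so dim ρ₃(𝒮) = 2m,
dim ρ₂(𝒮) = 2m - k₂ and dim ρ₁(𝒮) = 2m - k₁. -/
theorem maximal_ts_projections {R : Type*} [AddCommGroup R] [Module (ZMod 2) R]
    [FiniteDimensional (ZMod 2) R] (m : ℕ)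
    (Q : QuadraticForm (ZMod 2) R) (hdim : Module.finrank (ZMod 2) R = 2 * m)
    (hns : QuadNonsingular Q) (htype : IsPlusType Q m)
    (𝒮 : Submodule (ZMod 2) (Fin 3 → R))
    (hts : ∀ v ∈ 𝒮, Q (v 0) + Q (v 1) + Q (v 2) = 0)
    (hmax : Module.finrank (ZMod 2) 𝒮 = 3 * m)
    (h3 : coordPart 𝒮 2 0 1 = ⊥)
    (h12 : Module.finrank (ZMod 2) (coordPart 𝒮 1 0 2) ≤
      Module.finrank (ZMod 2) (coordPart 𝒮 0 1 2)) :
    Submodule.map (proj3 0) 𝒮 = orthComp Q (coordPart 𝒮 0 1 2) ∧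
    Submodule.map (proj3 1) 𝒮 = orthComp Q (coordPart 𝒮 1 0 2) ∧
    Submodule.map (proj3 2) 𝒮 = orthComp Q (coordPart 𝒮 2 0 1) ∧
    Module.finrank (ZMod 2) (Submodule.map (proj3 2) 𝒮) = 2 * m ∧
    Module.finrank (ZMod 2) (Submodule.map (proj3 1) 𝒮) =
      2 * m - Module.finrank (ZMod 2) (coordPart 𝒮 1 0 2) ∧
    Module.finrank (ZMod 2) (Submodule.map (proj3 0) 𝒮) =
      2 * m - Module.finrank (ZMod 2) (coordPart 𝒮 0 1 2) := by
  have projection {i j k : Fin 3} (hij : i ≠ j) (hik : i ≠ k) (hjk : j ≠ k) :=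
    map_proj3_eq_orthComp_coordPart_and_finrank_add_finrank hns hts (by lia) hij hik hjk
  obtain ⟨eq₀, dim₀⟩ := projection (i := 0) (j := 1) (k := 2) (by decide) (by decide) (by decide)
  obtain ⟨eq₁, dim₁⟩ := projection (i := 1) (j := 0) (k := 2) (by decide) (by decide) (by decide)
  obtain ⟨eq₂, dim₂⟩ := projection (i := 2) (j := 0) (k := 1) (by decide) (by decide) (by decide)
  rw [h3, finrank_bot, zero_add] at dim₂
  exact ⟨eq₀, eq₁, eq₂, by lia, by lia, by lia⟩
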